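/- Let α be the real root of x^3 - x - 1 = 0 and let A : ℕ → ℕ satisfy A(1)=1, A(2)=2, A(3)=2, A(k)=A(k-2)+A(k-3) for k ≥ 4. For ℓ ≥ 7, let k ≥ 7 be minimal such that A(k) ≥ ℓ. Then k ≤ ⌈(log₂ ℓ - log₂ 0.94)/log₂ α⌉. -/

import Mathlib

theorem stmt_12 (α : ℝ) (hα : α ^ 3 - α - 1 = 0)
    (A : ℕ → ℕ) (h1 : A 1 = 1) (h2 : A 2 = 2) (h3 : A 3 = 2)
    (hrec : ∀ k, 4 ≤ k → A k = A (k - 2) + A (k - 3))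
    (ℓ : ℕ) (hℓ : 7 ≤ ℓ) (k : ℕ) (hk : 7 ≤ k) (hAk : ℓ ≤ A k)
    (hmin : ∀ j, 7 ≤ j → ℓ ≤ A j → k ≤ j) :
    (k : ℤ) ≤ ⌈(Real.logb 2 ℓ - Real.logb 2 0.94) / Real.logb 2 α⌉ := by
  have hlo : 1.3 < α := by
    by_contra h
    push Not at h
    by_cases h0 : 0 ≤ α
    · nlinarith [mul_nonneg h0 (sub_nonneg.2 h), mul_nonneg (mul_nonneg h0 h0) (sub_nonneg.2 h)]
    · push Not at h0
      by_cases h5 : α ≤ -1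
      · nlinarith [mul_nonneg (neg_nonneg.2 h0.le) (by nlinarith : 0 ≤ α ^ 2 - 1)]
      · push Not at h5
        nlinarith [mul_pos (neg_pos.2 h0) (neg_pos.2 h0),
          mul_pos (mul_pos (neg_pos.2 h0) (neg_pos.2 h0)) (neg_pos.2 h0)]
  have hhi : α < 1.325 := by
    by_contra h
    push Not at h
    nlinarith [mul_nonneg (sub_nonneg.2 h) (sub_nonneg.2 h),
      mul_nonneg (mul_nonneg (sub_nonneg.2 h) (sub_nonneg.2 h)) (sub_nonneg.2 h)]
  have hpos : 0 < α := by linarith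
  have e4 := hrec 4 (by norm_num)
  have e5 := hrec 5 (by norm_num)
  have e6 := hrec 6 (by norm_num)
  have e7 := hrec 7 (by norm_num)
  have e8 := hrec 8 (by norm_num)
  have e9 := hrec 9 (by norm_num)
  norm_num at e4 e5 e6 e7 e8 e9
  have v7 : A 7 = 7 := by omega
  have v8 : A 8 = 9 := by omega
  have v9 : A 9 = 12 := by omega
  have p : ∀ n : ℕ, α ^ n ≤ 1.325 ^ n := fun n => pow_le_pow_left₀ hpos.le hhi.le n
  have key : ∀ n : ℕ, 0.94 * α ^ (n + 7) ≤ (A (n + 7) : ℝ) ∧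
      0.94 * α ^ (n + 8) ≤ (A (n + 8) : ℝ) ∧ 0.94 * α ^ (n + 9) ≤ (A (n + 9) : ℝ) := by
    intro n
    induction n with
    | zero =>
      have p7 := p 7
      have p8 := p 8
      have p9 := p 9
      norm_num [v7, v8, v9] at p7 p8 p9 ⊢
      refine ⟨?_, ?_, ?_⟩ <;> linarith
    | succ n ih =>
      obtain ⟨a, b, c⟩ := ih
      have e := hrec (n + 10) (by omega)
      rw [show n + 10 - 2 = n + 8 by omega, show n + 10 - 3 = n + 7 by omega] at e
      rw [show n + 1 + 7 = n + 8 by ring, show n + 1 + 8 = n + 9 by ring,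
        show n + 1 + 9 = n + 10 by ring]
      refine ⟨b, c, ?_⟩
      rw [e]
      push_cast
      have : α ^ (n + 10) = α ^ (n + 8) + α ^ (n + 7) := by
        linear_combination α ^ (n + 7) * hα
      linarith
  have hℓ' : (7 : ℝ) ≤ ℓ := by exact_mod_cast hℓ
  have hlog : 0 < Real.logb 2 α := Real.logb_pos (by norm_num) (by linarith)
  have hcond : ∀ m : ℕ, (Real.logb 2 ℓ - Real.logb 2 0.94) / Real.logb 2 α ≤ m →
      (ℓ : ℝ) ≤ 0.94 * α ^ m := by
    intro m hm
    rw [div_le_iff₀ hlog] at hm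
    have : Real.logb 2 ℓ ≤ Real.logb 2 (0.94 * α ^ m) := by
      rw [Real.logb_mul (by norm_num) (by positivity), Real.logb_pow]
      linarith
    exact (Real.logb_le_logb (by norm_num) (by linarith) (by positivity)).1 this
  by_contra hlt
  push Not at hlt
  have hle : (Real.logb 2 ℓ - Real.logb 2 0.94) / Real.logb 2 α ≤ ((k - 1 : ℕ) : ℝ) := by
    have : ⌈(Real.logb 2 ℓ - Real.logb 2 0.94) / Real.logb 2 α⌉ ≤ ((k - 1 : ℕ) : ℤ) := by omega
    exact_mod_cast Int.ceil_le.1 this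
  have hf := hcond _ hle
  by_cases h7 : k = 7
  · subst h7
    have p6 := p 6
    norm_num at p6 hf
    linarith
  · obtain ⟨n, rfl⟩ : ∃ n, k = n + 8 := ⟨k - 8, by omega⟩
    have : (ℓ : ℝ) ≤ A (n + 7) := hf.trans (key n).1
    have := hmin (n + 7) (by omega) (by exact_mod_cast this)
    omega
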